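/- There exists a constant C > 0, depending only on α and β, such that for every real Dirichlet quasimode datum (u, λ, f) on the stadium S with ‖u‖_{L²(S)} = 1, one has ‖f‖²_{L²(S)} + ∫_{∂S ∩ W} w |∂_N u|² dl ≥ C. -/

import Mathlib

open MeasureTheory Real Set Filter

noncomputable section

/-- Partial derivative in the first (x) variable. -/
def pdx (u : ℝ × ℝ → ℝ) (p : ℝ × ℝ) : ℝ := deriv (fun t => u (t, p.2)) p.1

/-- Partial derivative in the second (y) variable. -/
def pdy (u : ℝ × ℝ → ℝ) (p : ℝ × ℝ) : ℝ := deriv (fun t => u (p.1, t)) p.2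

/-- The positive Laplacian `Δu = -u_xx - u_yy`. -/
def lap (u : ℝ × ℝ → ℝ) (p : ℝ × ℝ) : ℝ := -(pdx (pdx u) p) - (pdy (pdy u) p)

/-- The central rectangle `R = [-α,α] × [-β,β]`. -/
def Rect (α β : ℝ) : Set (ℝ × ℝ) := Icc (-α) α ×ˢ Icc (-β) β

/-- The wings `W = W₊ ∪ W₋`, two half-discs of radius β centered at `(±α, 0)`. -/
def Wings (α β : ℝ) : Set (ℝ × ℝ) :=
  {p | (p.1 - α) ^ 2 + p.2 ^ 2 ≤ β ^ 2 ∧ α ≤ p.1} ∪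
  {p | (p.1 + α) ^ 2 + p.2 ^ 2 ≤ β ^ 2 ∧ p.1 ≤ -α}

/-- The Bunimovich stadium `S = R ∪ W`. -/
def Stadium (α β : ℝ) : Set (ℝ × ℝ) := Rect α β ∪ Wings α β

/-- The boundary `∂S`: two horizontal segments and two semicircles. -/
def StadiumBoundary (α β : ℝ) : Set (ℝ × ℝ) :=
  {p | |p.1| ≤ α ∧ (p.2 = β ∨ p.2 = -β)} ∪
  {p | (|p.1| - α) ^ 2 + p.2 ^ 2 = β ^ 2 ∧ α ≤ |p.1|}

/-- Boundary integral `∫_{∂S} g dl` of an integrand `g` depending on the boundary point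
and the outward unit normal at that point. -/
def bdryInt (α β : ℝ) (g : ℝ × ℝ → ℝ × ℝ → ℝ) : ℝ :=
  (∫ x in (-α)..α, (g (x, β) (0, 1) + g (x, -β) (0, -1))) +
  β * ∫ θ in (-(π / 2))..(π / 2),
    (g (α + β * cos θ, β * sin θ) (cos θ, sin θ) +
     g (-(α + β * cos θ), β * sin θ) (-cos θ, sin θ))

/-- Boundary integral `∫_{∂S ∩ W} g dl` over the two semicircles only. -/
def bdryIntW (α β : ℝ) (g : ℝ × ℝ → ℝ × ℝ → ℝ) : ℝ :=
  β * ∫ θ in (-(π / 2))..(π / 2),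
    (g (α + β * cos θ, β * sin θ) (cos θ, sin θ) +
     g (-(α + β * cos θ), β * sin θ) (-cos θ, sin θ))

/-- The normal derivative `∂_N u = n₁ ∂_x u + n₂ ∂_y u` at a boundary point `p`
with outward unit normal `n`. -/
def nderiv (u : ℝ × ℝ → ℝ) (p n : ℝ × ℝ) : ℝ := n.1 * pdx u p + n.2 * pdy u p

/-- A real Dirichlet quasimode datum `(u, λ, f)` on the stadium: `λ > 0`, `u` smooth on a
neighborhood of `S`, `u = 0` on `∂S`, and `(Δ - λ²) u = f` on `S`. -/
structure QMDatum (α β : ℝ) where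
  u : ℝ × ℝ → ℝ
  lam : ℝ
  f : ℝ × ℝ → ℝ
  lam_pos : 0 < lam
  smooth : ∃ V : Set (ℝ × ℝ), IsOpen V ∧ Stadium α β ⊆ V ∧ ContDiffOn ℝ (⊤ : ℕ∞) u V
  dirichlet : ∀ p ∈ StadiumBoundary α β, u p = 0
  eqn : ∀ p ∈ Stadium α β, lap u p - lam ^ 2 * u p = f p


def Xf (α β y : ℝ) : ℝ := α + Real.sqrt (β ^ 2 - y ^ 2)
def Yf (α β x : ℝ) : ℝ := Real.sqrt (β ^ 2 - (max (|x| - α) 0) ^ 2)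

lemma cont_Xf (α β : ℝ) : Continuous (Xf α β) := by unfold Xf; fun_prop
lemma cont_Yf (α β : ℝ) : Continuous (Yf α β) := by unfold Yf; fun_prop

lemma mem_stadium_X {α β : ℝ} (hα : 0 < α) (hβ : 0 < β) (x y : ℝ) :
    (x, y) ∈ Stadium α β ↔ y ∈ Icc (-β) β ∧ x ∈ Icc (-(Xf α β y)) (Xf α β y) := by
  simp only [Stadium, Rect, Wings, Xf, mem_union, mem_prod, mem_ofPred_eq, ← abs_le, mem_Icc]
  constructor
  · rintro (⟨h1, h2⟩ | ⟨h1, h2⟩ | ⟨h1, h2⟩)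
    · exact ⟨h2, h1.trans (by linarith [Real.sqrt_nonneg (β ^ 2 - y ^ 2)])⟩
    · refine ⟨abs_le_of_sq_le_sq (by nlinarith [sq_nonneg (x - α)]) hβ.le, ?_⟩
      rw [abs_of_nonneg (by linarith)]
      have := Real.abs_le_sqrt (x := x - α) (y := β ^ 2 - y ^ 2) (by linarith)
      linarith [le_abs_self (x - α)]
    · refine ⟨abs_le_of_sq_le_sq (by nlinarith [sq_nonneg (x + α)]) hβ.le, ?_⟩
      rw [abs_of_nonpos (by linarith)]
      have := Real.abs_le_sqrt (x := x + α) (y := β ^ 2 - y ^ 2) (by linarith)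
      linarith [neg_abs_le (x + α)]
  · rintro ⟨h1, h2⟩
    have hy : 0 ≤ β ^ 2 - y ^ 2 := by
      have := sq_le_sq' (abs_le.1 h1).1 (abs_le.1 h1).2
      linarith
    have hs := Real.sq_sqrt hy
    have hs0 := Real.sqrt_nonneg (β ^ 2 - y ^ 2)
    obtain ⟨h3, h4⟩ := abs_le.1 h2
    by_cases hx : |x| ≤ α
    · exact Or.inl ⟨hx, h1⟩
    · right
      rcases le_total 0 x with h0 | h0
      · rw [abs_of_nonneg h0] at hx
        left; constructor <;> nlinarith
      · rw [abs_of_nonpos h0] at hx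
        right; constructor <;> nlinarith

lemma mem_stadium_Y {α β : ℝ} (hα : 0 < α) (hβ : 0 < β) (x y : ℝ) :
    (x, y) ∈ Stadium α β ↔ x ∈ Icc (-(α + β)) (α + β) ∧ y ∈ Icc (-(Yf α β x)) (Yf α β x) := by
  simp only [Stadium, Rect, Wings, Yf, mem_union, mem_prod, mem_ofPred_eq, ← abs_le, mem_Icc]
  by_cases hx : |x| ≤ α
  · rw [max_eq_right (by linarith)]
    have : √(β ^ 2 - 0 ^ 2) = β := by rw [zero_pow two_ne_zero, sub_zero, Real.sqrt_sq hβ.le]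
    rw [this]
    have hx' := abs_le.1 hx
    constructor
    · rintro (⟨h1, h2⟩ | ⟨h1, h2⟩ | ⟨h1, h2⟩)
      · exact ⟨by linarith, h2⟩
      · exact ⟨by linarith, abs_le_of_sq_le_sq (by nlinarith [sq_nonneg (x - α)]) hβ.le⟩
      · exact ⟨by linarith, abs_le_of_sq_le_sq (by nlinarith [sq_nonneg (x + α)]) hβ.le⟩
    · rintro ⟨h1, h2⟩
      exact Or.inl ⟨hx, h2⟩
  · push Not at hx
    rw [max_eq_left (by linarith)]
    constructor
    · rintro (⟨h1, h2⟩ | ⟨h1, h2⟩ | ⟨h1, h2⟩)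
      · linarith
      · have h0 : 0 ≤ x := by linarith
        rw [abs_of_nonneg h0]
        refine ⟨?_, Real.abs_le_sqrt (by linarith)⟩
        have := abs_le_of_sq_le_sq (a := x - α) (b := β) (by nlinarith) hβ.le
        linarith [le_abs_self (x - α)]
      · have h0 : x ≤ 0 := by linarith
        rw [abs_of_nonpos h0]
        refine ⟨?_, Real.abs_le_sqrt (by linarith)⟩
        have := abs_le_of_sq_le_sq (a := x + α) (b := β) (by nlinarith) hβ.le
        linarith [neg_abs_le (x + α)]
    · rintro ⟨h1, h2⟩
      have hp : 0 ≤ β ^ 2 - (|x| - α) ^ 2 := by nlinarith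
      have h3 : y ^ 2 ≤ β ^ 2 - (|x| - α) ^ 2 := by
        have := sq_le_sq' (abs_le.1 h2).1 (abs_le.1 h2).2
        rwa [Real.sq_sqrt hp] at this
      right
      rcases le_total 0 x with h0 | h0
      · rw [abs_of_nonneg h0] at hx h3
        left; constructor <;> nlinarith
      · rw [abs_of_nonpos h0] at hx h3
        right; constructor <;> nlinarith

lemma isClosed_stadium (α β : ℝ) : IsClosed (Stadium α β) := by
  unfold Stadium Rect Wings
  refine (isClosed_Icc.prod isClosed_Icc).union (IsClosed.union ?_ ?_)
  · exact (isClosed_le (f := fun p : ℝ × ℝ => (p.1 - α) ^ 2 + p.2 ^ 2) (g := fun _ => β ^ 2)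
      (by fun_prop) (by fun_prop)).inter
      (isClosed_le (f := fun _ => α) (g := fun p : ℝ × ℝ => p.1) (by fun_prop) (by fun_prop))
  · exact (isClosed_le (f := fun p : ℝ × ℝ => (p.1 + α) ^ 2 + p.2 ^ 2) (g := fun _ => β ^ 2)
      (by fun_prop) (by fun_prop)).inter
      (isClosed_le (f := fun p : ℝ × ℝ => p.1) (g := fun _ => -α) (by fun_prop) (by fun_prop))

lemma isCompact_stadium {α β : ℝ} (hα : 0 < α) (hβ : 0 < β) : IsCompact (Stadium α β) := by
  refine IsCompact.of_isClosed_subset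
    ((isCompact_Icc (a := -(α + β)) (b := α + β)).prod (isCompact_Icc (a := -β) (b := β)))
    (isClosed_stadium α β) ?_
  exact fun p hp => ⟨((mem_stadium_Y hα hβ p.1 p.2).1 hp).1, ((mem_stadium_X hα hβ p.1 p.2).1 hp).1⟩

/-- Fubini, slices in y. -/
lemma fubini_Y {α β : ℝ} (hα : 0 < α) (hβ : 0 < β) (G : ℝ × ℝ → ℝ) (hG : Continuous G) :
    ∫ p in Stadium α β, G p =
      ∫ x in (-(α + β))..(α + β), ∫ y in (-(Yf α β x))..(Yf α β x), G (x, y) := by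
  have hm := (isClosed_stadium α β).measurableSet
  have hi : Integrable ((Stadium α β).indicator G) (volume.prod volume) :=
    (integrable_indicator_iff hm).2 (hG.continuousOn.integrableOn_compact (isCompact_stadium hα hβ))
  rw [← integral_indicator hm, Measure.volume_eq_prod, integral_prod _ hi,
    intervalIntegral.integral_of_le (by linarith), ← integral_Icc_eq_integral_Ioc,
    ← integral_indicator measurableSet_Icc]
  refine integral_congr_ae (Eventually.of_forall fun x => ?_)
  dsimp only
  by_cases hx : x ∈ Icc (-(α + β)) (α + β)
  · rw [indicator_of_mem hx, intervalIntegral.integral_of_le, ← integral_Icc_eq_integral_Ioc,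
      ← integral_indicator measurableSet_Icc]
    · refine integral_congr_ae (Eventually.of_forall fun y => ?_)
      dsimp only
      simp only [indicator, mem_stadium_Y hα hβ, hx, true_and]
    · have : 0 ≤ Yf α β x := Real.sqrt_nonneg _
      linarith
  · rw [indicator_of_notMem hx]
    simp only [indicator, mem_stadium_Y hα hβ, hx, false_and, if_false, integral_zero]

lemma fubini_X {α β : ℝ} (hα : 0 < α) (hβ : 0 < β) (G : ℝ × ℝ → ℝ) (hG : Continuous G) :
    ∫ p in Stadium α β, G p =
      ∫ y in (-β)..β, ∫ x in (-(Xf α β y))..(Xf α β y), G (x, y) := by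
  have hm := (isClosed_stadium α β).measurableSet
  have hi : Integrable ((Stadium α β).indicator G) (volume.prod volume) :=
    (integrable_indicator_iff hm).2 (hG.continuousOn.integrableOn_compact (isCompact_stadium hα hβ))
  rw [← integral_indicator hm, Measure.volume_eq_prod, integral_prod_symm _ hi,
    intervalIntegral.integral_of_le (by linarith), ← integral_Icc_eq_integral_Ioc,
    ← integral_indicator measurableSet_Icc]
  refine integral_congr_ae (Eventually.of_forall fun x => ?_)
  dsimp only
  by_cases hx : x ∈ Icc (-β) β
  · rw [indicator_of_mem hx, intervalIntegral.integral_of_le, ← integral_Icc_eq_integral_Ioc,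
      ← integral_indicator measurableSet_Icc]
    · refine integral_congr_ae (Eventually.of_forall fun y => ?_)
      dsimp only
      simp only [indicator, mem_stadium_X hα hβ, hx, true_and]
    · have : 0 ≤ √(β ^ 2 - x ^ 2) := Real.sqrt_nonneg _
      unfold Xf
      linarith
  · rw [indicator_of_notMem hx]
    simp only [indicator, mem_stadium_X hα hβ, hx, false_and, if_false, integral_zero]

lemma div_X {α β : ℝ} (hα : 0 < α) (hβ : 0 < β) (F G : ℝ × ℝ → ℝ) (hF : Continuous F)
    (hG : Continuous G)
    (h : ∀ x y, HasDerivAt (fun t => F (t, y)) (G (x, y)) x) :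
    ∫ p in Stadium α β, G p = β * ∫ θ in (-(π / 2))..(π / 2),
      (F (α + β * cos θ, β * sin θ) * cos θ - F (-(α + β * cos θ), β * sin θ) * cos θ) := by
  have e1 : ∀ y, ∫ x in (-(Xf α β y))..(Xf α β y), G (x, y) =
      F (Xf α β y, y) - F (-(Xf α β y), y) := fun y =>
    intervalIntegral.integral_eq_sub_of_hasDerivAt (fun x _ => h x y)
      ((by fun_prop : Continuous fun x => G (x, y)).intervalIntegrable _ _)
  rw [fubini_X hα hβ G hG]
  simp_rw [e1]
  have hX := cont_Xf α β
  have := intervalIntegral.integral_comp_mul_deriv (a := -(π / 2)) (b := π / 2)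
    (f := fun θ => β * sin θ) (f' := fun θ => β * cos θ)
    (g := fun y => F (Xf α β y, y) - F (-(Xf α β y), y))
    (fun x _ => (Real.hasDerivAt_sin x).const_mul β) (by fun_prop) (by fun_prop)
  simp only [Real.sin_neg, Real.sin_pi_div_two, mul_one, mul_neg] at this
  rw [← this, ← intervalIntegral.integral_const_mul]
  refine intervalIntegral.integral_congr fun θ hθ => ?_
  rw [uIcc_of_le (by linarith [Real.pi_pos])] at hθ
  have hc := Real.cos_nonneg_of_mem_Icc hθ
  have : Xf α β (β * sin θ) = α + β * cos θ := by
    unfold Xf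
    rw [show β ^ 2 - (β * sin θ) ^ 2 = (β * cos θ) ^ 2 by
      rw [mul_pow, mul_pow, Real.sin_sq]; ring, Real.sqrt_sq (by positivity)]
  simp only [Function.comp, this]
  ring

lemma arc_Y {α β : ℝ} (hβ : 0 < β) (K : ℝ → ℝ → ℝ) (hK : Continuous fun p : ℝ × ℝ => K p.1 p.2) :
    ∫ x in α..(α + β), K x (√(β ^ 2 - (x - α) ^ 2)) =
      β * ∫ θ in (0:ℝ)..(π / 2), K (α + β * cos θ) (β * sin θ) * sin θ := by
  have := intervalIntegral.integral_comp_mul_deriv (a := π / 2) (b := 0)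
    (f := fun θ => α + β * cos θ) (f' := fun θ => β * (- sin θ))
    (g := fun x => K x (√(β ^ 2 - (x - α) ^ 2)))
    (fun x _ => ((Real.hasDerivAt_cos x).const_mul β).const_add α) (by fun_prop)
    (hK.comp (by fun_prop : Continuous fun x : ℝ => (x, √(β ^ 2 - (x - α) ^ 2))))
  simp only [Real.cos_zero, Real.cos_pi_div_two, mul_one, mul_zero, add_zero] at this
  rw [← this, ← intervalIntegral.integral_const_mul, intervalIntegral.integral_symm,
    ← intervalIntegral.integral_neg]
  refine intervalIntegral.integral_congr fun θ hθ => ?_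
  rw [uIcc_of_le (by linarith [Real.pi_pos])] at hθ
  have hs := Real.sin_nonneg_of_nonneg_of_le_pi hθ.1 (by linarith [hθ.2, Real.pi_pos])
  have : √(β ^ 2 - (α + β * cos θ - α) ^ 2) = β * sin θ := by
    rw [show β ^ 2 - (α + β * cos θ - α) ^ 2 = (β * sin θ) ^ 2 by
      rw [mul_pow, Real.sin_sq]; ring, Real.sqrt_sq (by positivity)]
  simp only [Function.comp, this]
  ring

lemma div_Y {α β : ℝ} (hα : 0 < α) (hβ : 0 < β) (F G : ℝ × ℝ → ℝ) (hF : Continuous F)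
    (hG : Continuous G)
    (h : ∀ x y, HasDerivAt (fun t => F (x, t)) (G (x, y)) y)
    (h0 : ∀ x ∈ Ioo (-α) α, F (x, β) = 0 ∧ F (x, -β) = 0) :
    ∫ p in Stadium α β, G p = β * ∫ θ in (-(π / 2))..(π / 2),
      (F (α + β * cos θ, β * sin θ) * sin θ + F (-(α + β * cos θ), β * sin θ) * sin θ) := by
  have e1 : ∀ x, ∫ y in (-(Yf α β x))..(Yf α β x), G (x, y) =
      F (x, Yf α β x) - F (x, -(Yf α β x)) := fun x =>
    intervalIntegral.integral_eq_sub_of_hasDerivAt (fun y _ => h x y)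
      ((by fun_prop : Continuous fun y => G (x, y)).intervalIntegrable _ _)
  rw [fubini_Y hα hβ G hG]
  simp_rw [e1]
  have hY := cont_Yf α β
  set k : ℝ → ℝ := fun x => F (x, Yf α β x) - F (x, -(Yf α β x)) with hk
  have hkc : Continuous k := by fun_prop
  have hint : ∀ a b, IntervalIntegrable k volume a b := fun a b => hkc.intervalIntegrable a b
  rw [← intervalIntegral.integral_add_adjacent_intervals (hint (-(α + β)) (-α)) (hint _ _),
    ← intervalIntegral.integral_add_adjacent_intervals (hint (-α) α) (hint _ _)]
  have hz : ∀ x ∈ Icc (-α) α, k x = 0 := by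
    have hz1 : ∀ x ∈ Ioo (-α) α, k x = 0 := by
      intro x hx
      have : Yf α β x = β := by
        unfold Yf
        rw [max_eq_right (by linarith [abs_lt.2 hx]), zero_pow two_ne_zero, sub_zero,
          Real.sqrt_sq hβ.le]
      simp only [hk, this, (h0 x hx).1, (h0 x hx).2, sub_zero]
    intro x hx
    rw [← closure_Ioo (by linarith : (-α) ≠ α)] at hx
    have hcl : IsClosed {x | k x = 0} := isClosed_eq hkc continuous_const
    exact closure_minimal hz1 hcl hx
  have z : ∫ x in (-α)..α, k x = 0 := by
    rw [intervalIntegral.integral_congr (g := fun _ => 0), intervalIntegral.integral_zero]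
    intro x hx
    rw [uIcc_of_le (by linarith)] at hx
    exact hz x hx
  rw [z, zero_add, ← intervalIntegral.integral_comp_neg (fun x => k x), ← intervalIntegral.integral_add
    ((by fun_prop : Continuous fun x => k (-x)).intervalIntegrable _ _) (hint _ _)]
  have e2 : ∫ x in α..(α + β), (k (-x) + k x) = ∫ x in α..(α + β),
      (fun x y => F (-x, y) - F (-x, -y) + (F (x, y) - F (x, -y))) x (√(β ^ 2 - (x - α) ^ 2)) := by
    refine intervalIntegral.integral_congr fun x hx => ?_
    rw [uIcc_of_le (by linarith)] at hx
    have a1 : Yf α β x = √(β ^ 2 - (x - α) ^ 2) := by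
      unfold Yf; rw [abs_of_nonneg (by linarith [hx.1]), max_eq_left (by linarith [hx.1])]
    have a2 : Yf α β (-x) = √(β ^ 2 - (x - α) ^ 2) := by
      rw [← a1]; unfold Yf; rw [abs_neg]
    simp only [hk, a1, a2]
  rw [e2, arc_Y hβ (fun x y => F (-x, y) - F (-x, -y) + (F (x, y) - F (x, -y))) (by fun_prop)]
  congr 1
  set m : ℝ → ℝ := fun θ => F (α + β * cos θ, β * sin θ) * sin θ
    + F (-(α + β * cos θ), β * sin θ) * sin θ with hm
  have hmc : Continuous m := by fun_prop
  have hneg := intervalIntegral.integral_comp_neg (a := 0) (b := π / 2) (fun x => m x)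
  rw [neg_zero] at hneg
  rw [← intervalIntegral.integral_add_adjacent_intervals (hmc.intervalIntegrable (-(π / 2)) 0)
    (hmc.intervalIntegrable _ _), ← hneg, ← intervalIntegral.integral_add
    ((by fun_prop : Continuous fun x => m (-x)).intervalIntegrable _ _)
    (hmc.intervalIntegrable _ _)]
  refine intervalIntegral.integral_congr fun θ _ => ?_
  simp only [hm, Real.cos_neg, Real.sin_neg, mul_neg]
  ring

open Topology in
lemma smooth_ext {u : ℝ × ℝ → ℝ} {S V : Set (ℝ × ℝ)} (hS : IsClosed S) (hV : IsOpen V) (hSV : S ⊆ V)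
    (hu : ContDiffOn ℝ (⊤ : ℕ∞) u V) :
    ∃ v : ℝ × ℝ → ℝ, ContDiff ℝ (⊤ : ℕ∞) v ∧ ∀ p ∈ S, v =ᶠ[𝓝 p] u := by
  obtain ⟨f, h0, h1, -⟩ := exists_contMDiffMap_zero_one_nhds_of_isClosed (n := (⊤ : ℕ∞))
    (modelWithCornersSelf ℝ (ℝ × ℝ)) hV.isClosed_compl hS (disjoint_compl_left_iff_subset.2 hSV)
  have hf : ContDiff ℝ (⊤ : ℕ∞) f := f.contMDiff.contDiff
  refine ⟨fun p => f p * u p, ?_, fun p hp => ?_⟩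
  · rw [contDiff_iff_contDiffAt]
    intro p
    by_cases hp : p ∈ V
    · exact hf.contDiffAt.mul (hu.contDiffAt (hV.mem_nhds hp))
    · have h2 : ∀ᶠ x in 𝓝 p, f x = 0 := h0.filter_mono (nhds_le_nhdsSet hp)
      refine (contDiffAt_const (c := (0:ℝ))).congr_of_eventuallyEq ?_
      filter_upwards [h2] with x hx
      rw [hx, zero_mul]
  · have h2 : ∀ᶠ x in 𝓝 p, f x = 1 := h1.filter_mono (nhds_le_nhdsSet hp)
    filter_upwards [h2] with x hx
    rw [hx, one_mul]

open Topology in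
lemma pdx_congr {u v : ℝ × ℝ → ℝ} {p : ℝ × ℝ} (h : u =ᶠ[𝓝 p] v) : pdx u =ᶠ[𝓝 p] pdx v := by
  filter_upwards [h.eventuallyEq_nhds] with q hq
  unfold pdx
  refine Filter.EventuallyEq.deriv_eq ?_
  have : Filter.Tendsto (fun t : ℝ => (t, q.2)) (𝓝 q.1) (𝓝 q) :=
    (by fun_prop : Continuous fun t : ℝ => (t, q.2)).tendsto' _ _ rfl
  exact this.eventually hq

open Topology in
lemma pdy_congr {u v : ℝ × ℝ → ℝ} {p : ℝ × ℝ} (h : u =ᶠ[𝓝 p] v) : pdy u =ᶠ[𝓝 p] pdy v := by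
  filter_upwards [h.eventuallyEq_nhds] with q hq
  unfold pdy
  refine Filter.EventuallyEq.deriv_eq ?_
  have : Filter.Tendsto (fun t : ℝ => (q.1, t)) (𝓝 q.2) (𝓝 q) :=
    (by fun_prop : Continuous fun t : ℝ => (q.1, t)).tendsto' _ _ rfl
  exact this.eventually hq

lemma hasx {u : ℝ × ℝ → ℝ} (hu : Differentiable ℝ u) (x y : ℝ) :
    HasDerivAt (fun t => u (t, y)) (fderiv ℝ u (x, y) (1, 0)) x := by
  have h1 : HasDerivAt (fun t : ℝ => (t, y)) ((1:ℝ), (0:ℝ)) x :=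
    (hasDerivAt_id x).prodMk (hasDerivAt_const x y)
  exact (hu (x, y)).hasFDerivAt.comp_hasDerivAt x h1

lemma hasy {u : ℝ × ℝ → ℝ} (hu : Differentiable ℝ u) (x y : ℝ) :
    HasDerivAt (fun t => u (x, t)) (fderiv ℝ u (x, y) (0, 1)) y := by
  have h1 : HasDerivAt (fun t : ℝ => (x, t)) ((0:ℝ), (1:ℝ)) y :=
    (hasDerivAt_const y x).prodMk (hasDerivAt_id y)
  exact (hu (x, y)).hasFDerivAt.comp_hasDerivAt y h1

lemma pdx_eq {u : ℝ × ℝ → ℝ} (hu : Differentiable ℝ u) : pdx u = fun p => fderiv ℝ u p (1, 0) :=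
  funext fun p => (hasx hu p.1 p.2).deriv

lemma pdy_eq {u : ℝ × ℝ → ℝ} (hu : Differentiable ℝ u) : pdy u = fun p => fderiv ℝ u p (0, 1) :=
  funext fun p => (hasy hu p.1 p.2).deriv

lemma diff_of {u : ℝ × ℝ → ℝ} (hu : ContDiff ℝ (⊤ : ℕ∞) u) : Differentiable ℝ u :=
  hu.differentiable (by simp)

lemma smooth_pdx {u : ℝ × ℝ → ℝ} (hu : ContDiff ℝ (⊤ : ℕ∞) u) : ContDiff ℝ (⊤ : ℕ∞) (pdx u) := by
  rw [pdx_eq (diff_of hu)]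
  exact (hu.fderiv_right (m := (⊤ : ℕ∞)) (by simp)).clm_apply contDiff_const

lemma smooth_pdy {u : ℝ × ℝ → ℝ} (hu : ContDiff ℝ (⊤ : ℕ∞) u) : ContDiff ℝ (⊤ : ℕ∞) (pdy u) := by
  rw [pdy_eq (diff_of hu)]
  exact (hu.fderiv_right (m := (⊤ : ℕ∞)) (by simp)).clm_apply contDiff_const

lemma hpdx {u : ℝ × ℝ → ℝ} (hu : ContDiff ℝ (⊤ : ℕ∞) u) (x y : ℝ) :
    HasDerivAt (fun t => u (t, y)) (pdx u (x, y)) x := by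
  rw [pdx_eq (diff_of hu)]; exact hasx (diff_of hu) x y

lemma hpdy {u : ℝ × ℝ → ℝ} (hu : ContDiff ℝ (⊤ : ℕ∞) u) (x y : ℝ) :
    HasDerivAt (fun t => u (x, t)) (pdy u (x, y)) y := by
  rw [pdy_eq (diff_of hu)]; exact hasy (diff_of hu) x y

lemma pd_symm {u : ℝ × ℝ → ℝ} (hu : ContDiff ℝ (⊤ : ℕ∞) u) : pdx (pdy u) = pdy (pdx u) := by
  rw [pdx_eq (diff_of (smooth_pdy hu)), pdy_eq (diff_of (smooth_pdx hu)), pdx_eq (diff_of hu),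
    pdy_eq (diff_of hu)]
  have hd : Differentiable ℝ (fderiv ℝ u) :=
    (hu.fderiv_right (m := (⊤ : ℕ∞)) (by simp)).differentiable (by simp)
  funext p
  have hs := (hu.contDiffAt (x := p)).isSymmSndFDerivAt
    (by simp only [minSmoothness_of_isRCLikeNormedField]; exact WithTop.coe_le_coe.2 (le_top : (2:ℕ∞) ≤ ⊤))
  have e : ∀ a b : ℝ × ℝ, fderiv ℝ (fun p => fderiv ℝ u p a) p b = fderiv ℝ (fderiv ℝ u) p b a := by
    intro a b
    rw [fderiv_clm_apply (hd p) (differentiableAt_const a)]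
    simp
  rw [e, e]
  exact hs.eq _ _

/-- chain rule along a curve -/
lemma chain {u : ℝ × ℝ → ℝ} (hu : ContDiff ℝ (⊤ : ℕ∞) u) {a b : ℝ → ℝ} {a' b' t : ℝ}
    (ha : HasDerivAt a a' t) (hb : HasDerivAt b b' t) :
    HasDerivAt (fun s => u (a s, b s)) (a' * pdx u (a t, b t) + b' * pdy u (a t, b t)) t := by
  have := (diff_of hu (a t, b t)).hasFDerivAt.comp_hasDerivAt t (ha.prodMk hb)
  have e : ((a', b') : ℝ × ℝ) = a' • ((1:ℝ), (0:ℝ)) + b' • ((0:ℝ), (1:ℝ)) := by simp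
  rw [e, map_add, map_smul, map_smul] at this
  rw [pdx_eq (diff_of hu), pdy_eq (diff_of hu)]
  exact this

open Topology in
lemma tang_seg {α β : ℝ} {u : ℝ × ℝ → ℝ} (hu : ContDiff ℝ (⊤ : ℕ∞) u)
    (hd : ∀ p ∈ StadiumBoundary α β, u p = 0) {x : ℝ} (hx : x ∈ Ioo (-α) α) {y : ℝ}
    (hy : y = β ∨ y = -β) : u (x, y) = 0 ∧ pdx u (x, y) = 0 := by
  have key : ∀ t ∈ Ioo (-α) α, u (t, y) = 0 := fun t ht => hd _ (Or.inl ⟨(abs_lt.2 ht).le, hy⟩)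
  refine ⟨key x hx, ?_⟩
  have h1 : (fun t => u (t, y)) =ᶠ[𝓝 x] fun _ => 0 := by
    filter_upwards [isOpen_Ioo.mem_nhds hx] with t ht using key t ht
  have := (hpdx hu x y).deriv
  rw [h1.deriv_eq] at this
  simpa using this.symm

lemma arc_mem {α β : ℝ} (hα : 0 < α) (hβ : 0 < β) {σ θ : ℝ} (hσ : σ = 1 ∨ σ = -1)
    (hθ : θ ∈ Icc (-(π / 2)) (π / 2)) :
    |σ * (α + β * cos θ)| = α + β * cos θ ∧
    (σ * (α + β * cos θ), β * sin θ) ∈ StadiumBoundary α β ∧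
    (σ * (α + β * cos θ), β * sin θ) ∈ Stadium α β := by
  have hc := Real.cos_nonneg_of_mem_Icc hθ
  have h1 : 0 ≤ β * cos θ := by positivity
  have hab : |σ * (α + β * cos θ)| = α + β * cos θ := by
    rw [abs_mul, abs_of_nonneg (by linarith : 0 ≤ α + β * cos θ)]
    rcases hσ with rfl | rfl <;> simp
  have hsc := Real.sin_sq_add_cos_sq θ
  refine ⟨hab, Or.inr ⟨?_, ?_⟩, Or.inr ?_⟩
  · simp only [hab]; linear_combination β ^ 2 * hsc
  · simp only [hab]; linarith
  · rcases hσ with rfl | rfl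
    · exact Or.inl ⟨le_of_eq (by dsimp only; linear_combination β ^ 2 * hsc), by dsimp only; linarith⟩
    · exact Or.inr ⟨le_of_eq (by dsimp only; linear_combination β ^ 2 * hsc), by dsimp only; linarith⟩

open Topology in
lemma tang_arc {α β : ℝ} (hα : 0 < α) (hβ : 0 < β) {u : ℝ × ℝ → ℝ} (hu : ContDiff ℝ (⊤ : ℕ∞) u)
    (hd : ∀ p ∈ StadiumBoundary α β, u p = 0) {σ θ : ℝ} (hσ : σ = 1 ∨ σ = -1)
    (hθ : θ ∈ Icc (-(π / 2)) (π / 2)) :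
    u (σ * (α + β * cos θ), β * sin θ) = 0 ∧
    cos θ * pdy u (σ * (α + β * cos θ), β * sin θ) =
      σ * sin θ * pdx u (σ * (α + β * cos θ), β * sin θ) := by
  refine ⟨hd _ (arc_mem hα hβ hσ hθ).2.1, ?_⟩
  have c1 := (smooth_pdx hu).continuous
  have c2 := (smooth_pdy hu).continuous
  have hcl : IsClosed {θ | cos θ * pdy u (σ * (α + β * cos θ), β * sin θ) =
      σ * sin θ * pdx u (σ * (α + β * cos θ), β * sin θ)} :=
    isClosed_eq (by fun_prop) (by fun_prop)
  rw [← closure_Ioo (by linarith [Real.pi_pos] : (-(π / 2)) ≠ π / 2)] at hθ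
  refine closure_minimal (fun t ht => ?_) hcl hθ
  have h1 : (fun t => u (σ * (α + β * cos t), β * sin t)) =ᶠ[𝓝 t] fun _ => 0 := by
    filter_upwards [isOpen_Ioo.mem_nhds ht] with s hs
    exact hd _ (arc_mem hα hβ hσ (Ioo_subset_Icc_self hs)).2.1
  have := (chain hu ((((Real.hasDerivAt_cos t).const_mul β).const_add α).const_mul σ)
    ((Real.hasDerivAt_sin t).const_mul β)).deriv
  rw [h1.deriv_eq] at this
  simp only [deriv_const] at this
  have hb : β ≠ 0 := hβ.ne'
  apply mul_left_cancel₀ hb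
  linear_combination -this

lemma alg_bd {σ X a b c s : ℝ} (hσ : σ = 1 ∨ σ = -1) (h : c * b = σ * s * a)
    (hsc : s ^ 2 + c ^ 2 = 1) :
    σ * (σ * X * (a ^ 2 - b ^ 2)) * c + 2 * (σ * X) * a * b * s = X * c * (σ * c * a + s * b) ^ 2 := by
  have hs : s ^ 2 = 1 - c ^ 2 := by linarith
  have e : ∀ τ : ℝ, τ ^ 2 = 1 → c * b = τ * s * a →
    τ * (τ * X * (a ^ 2 - b ^ 2)) * c + 2 * (τ * X) * a * b * s = X * c * (τ * c * a + s * b) ^ 2 := by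
    intro τ hτ hT
    linear_combination (exp := 1) X * (-b * (1 + s ^ 2) - τ * s * a * c) * hT
      + (X * c * (a ^ 2 - b ^ 2) - X * c ^ 3 * a ^ 2 - X * s ^ 2 * a ^ 2 * c) * hτ
      - X * (τ * a * b * s + c * a ^ 2) * hsc
  rcases hσ with rfl | rfl
  · exact e 1 (by norm_num) h
  · exact e (-1) (by norm_num) h

lemma main_global {α β : ℝ} (hα : 0 < α) (hβ : 0 < β) {u : ℝ × ℝ → ℝ} (hu : ContDiff ℝ (⊤ : ℕ∞) u)
    (hd : ∀ p ∈ StadiumBoundary α β, u p = 0) (lam : ℝ)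
    (h1 : (∫ p in Stadium α β, (u p) ^ 2) = 1) :
    1 / 2 ≤ (12 * (α + β) ^ 4 + 4 * (α + β) ^ 3 / β) *
      ((∫ p in Stadium α β, (lap u p - lam ^ 2 * u p) ^ 2) +
        bdryIntW α β (fun p n => (|p.1| - α) * (nderiv u p n) ^ 2)) := by
  have hux := smooth_pdx hu
  have huy := smooth_pdy hu
  have c0 := hu.continuous
  have c1 := hux.continuous
  have c2 := huy.continuous
  have c11 := (smooth_pdx hux).continuous
  have c12 := (smooth_pdy hux).continuous
  have c21 := (smooth_pdx huy).continuous
  have c22 := (smooth_pdy huy).continuous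
  have hpi := Real.pi_pos
  have hLβ : 0 < α + β := by linarith
  set L := α + β with hL
  -- Poincare identity
  have I0 := div_X hα hβ (fun p => p.1 * u p ^ 2) (fun p => u p ^ 2 + 2 * p.1 * u p * pdx u p)
    (by fun_prop) (by fun_prop) (fun x y => by
      have := (hasDerivAt_id x).mul ((hpdx hu x y).pow 2)
      refine this.congr_deriv ?_
      simp; ring)
  have I0' : ∫ p in Stadium α β, (u p ^ 2 + 2 * p.1 * u p * pdx u p) = 0 := by
    rw [I0, intervalIntegral.integral_congr (g := fun _ => 0), intervalIntegral.integral_zero, mul_zero]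
    intro θ hθ
    rw [uIcc_of_le (by linarith)] at hθ
    have e1 := (tang_arc hα hβ hu hd (Or.inl rfl) hθ).1
    have e2 := (tang_arc hα hβ hu hd (Or.inr rfl) hθ).1
    rw [one_mul] at e1
    rw [neg_one_mul] at e2
    simp only [e1, e2]; ring
  have I1 := div_X hα hβ
    (fun p => lam ^ 2 * (p.1 * u p ^ 2) + p.1 * pdx u p ^ 2 - p.1 * pdy u p ^ 2 + u p * pdx u p)
    (fun p => lam ^ 2 * (u p ^ 2 + 2 * p.1 * u p * pdx u p)
      + (pdx u p ^ 2 + 2 * p.1 * pdx u p * pdx (pdx u) p)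
      - (pdy u p ^ 2 + 2 * p.1 * pdy u p * pdx (pdy u) p)
      + (pdx u p ^ 2 + u p * pdx (pdx u) p))
    (by fun_prop) (by fun_prop) (fun x y => by
      have a1 := ((hasDerivAt_id x).mul ((hpdx hu x y).pow 2)).const_mul (lam ^ 2)
      have a2 := (hasDerivAt_id x).mul ((hpdx hux x y).pow 2)
      have a3 := (hasDerivAt_id x).mul ((hpdx huy x y).pow 2)
      have a4 := (hpdx hu x y).mul (hpdx hux x y)
      refine (((a1.add a2).sub a3).add a4).congr_deriv ?_
      simp; ring)
  have I2 := div_Y hα hβ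
    (fun p => 2 * p.1 * (pdx u p * pdy u p) + u p * pdy u p)
    (fun p => 2 * p.1 * (pdy (pdx u) p * pdy u p + pdx u p * pdy (pdy u) p)
      + (pdy u p * pdy u p + u p * pdy (pdy u) p))
    (by fun_prop) (by fun_prop) (fun x y => by
      exact (((hpdy hux x y).mul (hpdy huy x y)).const_mul (2 * x)).add
        ((hpdy hu x y).mul (hpdy huy x y)))
    (fun x hx => by
      have e1 := tang_seg hu hd hx (Or.inl rfl)
      have e2 := tang_seg hu hd hx (Or.inr rfl)
      simp only [e1.1, e1.2, e2.1, e2.2]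
      constructor <;> ring)
  set G1 : ℝ × ℝ → ℝ := fun p => lam ^ 2 * (u p ^ 2 + 2 * p.1 * u p * pdx u p)
      + (pdx u p ^ 2 + 2 * p.1 * pdx u p * pdx (pdx u) p)
      - (pdy u p ^ 2 + 2 * p.1 * pdy u p * pdx (pdy u) p)
      + (pdx u p ^ 2 + u p * pdx (pdx u) p) with hG1
  set G2 : ℝ × ℝ → ℝ := fun p => 2 * p.1 * (pdy (pdx u) p * pdy u p + pdx u p * pdy (pdy u) p)
      + (pdy u p * pdy u p + u p * pdy (pdy u) p) with hG2
  set Gp : ℝ × ℝ → ℝ := fun p => u p ^ 2 + 2 * p.1 * u p * pdx u p with hGp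
  set f : ℝ × ℝ → ℝ := fun p => lap u p - lam ^ 2 * u p with hf
  have cf : Continuous f := by simp only [hf, lap]; fun_prop
  have cG1 : Continuous G1 := by fun_prop
  have cG2 : Continuous G2 := by fun_prop
  have cGp : Continuous Gp := by fun_prop
  have hint : ∀ g : ℝ × ℝ → ℝ, Continuous g → IntegrableOn g (Stadium α β) := fun g hg =>
    hg.continuousOn.integrableOn_compact (isCompact_stadium hα hβ)
  -- boundary term
  set B := bdryIntW α β (fun p n => (|p.1| - α) * (nderiv u p n) ^ 2) with hB
  let gp : ℝ → ℝ := fun θ => nderiv u (α + β * cos θ, β * sin θ) (cos θ, sin θ)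
  let gm : ℝ → ℝ := fun θ => nderiv u (-(α + β * cos θ), β * sin θ) (-cos θ, sin θ)
  have cgp : Continuous gp := by simp only [gp, nderiv]; fun_prop
  have cgm : Continuous gm := by simp only [gm, nderiv]; fun_prop
  have hBe : B = β * ∫ θ in (-(π / 2))..(π / 2), β * cos θ * (gp θ ^ 2 + gm θ ^ 2) := by
    rw [hB, bdryIntW]
    congr 1
    refine intervalIntegral.integral_congr fun θ hθ => ?_
    rw [uIcc_of_le (by linarith)] at hθ
    have e1 := (arc_mem hα hβ (Or.inl rfl) hθ).1
    have e2 := (arc_mem hα hβ (Or.inr rfl) hθ).1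
    rw [one_mul] at e1
    rw [neg_one_mul] at e2
    simp only [e1, e2, gp, gm]; ring
  have hB0 : 0 ≤ B := by
    rw [hBe]
    refine mul_nonneg hβ.le (intervalIntegral.integral_nonneg (by linarith) fun θ hθ => ?_)
    have hc := Real.cos_nonneg_of_mem_Icc hθ
    positivity
  have hbd : (∫ p in Stadium α β, G1 p) + (∫ p in Stadium α β, G2 p) =
      β * ∫ θ in (-(π / 2))..(π / 2), (α + β * cos θ) * cos θ * (gp θ ^ 2 + gm θ ^ 2) := by
    rw [I1, I2, ← mul_add, ← intervalIntegral.integral_add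
      (Continuous.intervalIntegrable (by fun_prop) _ _)
      (Continuous.intervalIntegrable (by fun_prop) _ _)]
    congr 1
    refine intervalIntegral.integral_congr fun θ hθ => ?_
    rw [uIcc_of_le (by linarith)] at hθ
    have hsc := Real.sin_sq_add_cos_sq θ
    obtain ⟨p1, p2⟩ := tang_arc hα hβ hu hd (Or.inl rfl) hθ
    obtain ⟨m1, m2⟩ := tang_arc hα hβ hu hd (Or.inr rfl) hθ
    have p3 := alg_bd (X := α + β * cos θ) (Or.inl rfl) p2 hsc
    have m3 := alg_bd (X := α + β * cos θ) (Or.inr rfl) m2 hsc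
    simp only [one_mul] at p1 p3
    simp only [neg_one_mul] at m1 m3
    simp only [gp, gm, nderiv, p1, m1]
    linear_combination p3 + m3
  have hbd2 : (∫ p in Stadium α β, G1 p) + (∫ p in Stadium α β, G2 p) ≤ L / β * B := by
    rw [hbd, hBe, mul_left_comm, ← intervalIntegral.integral_const_mul (L / β)]
    refine mul_le_mul_of_nonneg_left ?_ hβ.le
    refine intervalIntegral.integral_mono_on (by linarith)
      (Continuous.intervalIntegrable (by fun_prop) _ _)
      (Continuous.intervalIntegrable (by fun_prop) _ _) fun θ hθ => ?_
    have hc := Real.cos_nonneg_of_mem_Icc hθ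
    have e : L / β * (β * cos θ * (gp θ ^ 2 + gm θ ^ 2)) = L * cos θ * (gp θ ^ 2 + gm θ ^ 2) := by
      field_simp
    rw [e]
    have : α + β * cos θ ≤ L := by rw [hL]; nlinarith [Real.cos_le_one θ]
    gcongr
  -- pointwise inequality
  have hpt : ∀ p ∈ Stadium α β, u p ^ 2 / 2 ≤
      2 * Gp p + (4 * L ^ 2 * G1 p + 4 * L ^ 2 * G2 p) + 12 * L ^ 4 * f p ^ 2 := by
    intro p hp
    have hx : p.1 ^ 2 ≤ L ^ 2 := by
      have := ((mem_stadium_Y hα hβ p.1 p.2).1 hp).1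
      exact sq_le_sq' this.1 this.2
    have hG : G1 p + G2 p = 2 * pdx u p ^ 2 - f p * u p - 2 * p.1 * f p * pdx u p := by
      simp only [hG1, hG2, hf, lap, pd_symm hu]; ring
    have hGp' : Gp p = u p ^ 2 + 2 * p.1 * u p * pdx u p := rfl
    generalize G1 p = g1 at *
    generalize G2 p = g2 at *
    generalize Gp p = g3 at *
    generalize f p = F at *
    generalize u p = U at *
    generalize pdx u p = D at *
    generalize p.1 = x at *
    have q1 : U ^ 2 ≤ 2 * g3 + 4 * L ^ 2 * D ^ 2 := by
      have := mul_le_mul_of_nonneg_right hx (sq_nonneg D)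
      nlinarith [sq_nonneg (U + 2 * x * D)]
    have q2 : D ^ 2 ≤ g1 + g2 + F * U + L ^ 2 * F ^ 2 := by
      have := mul_le_mul_of_nonneg_right hx (sq_nonneg F)
      nlinarith [sq_nonneg (D - x * F)]
    have q3 : 4 * L ^ 2 * (F * U) ≤ U ^ 2 / 2 + 8 * L ^ 4 * F ^ 2 := by
      nlinarith [sq_nonneg (U - 4 * L ^ 2 * F)]
    have q4 := mul_le_mul_of_nonneg_left q2 (by positivity : 0 ≤ 4 * L ^ 2)
    nlinarith
  have hmono := setIntegral_mono_on (hint (fun p => u p ^ 2 / 2) (by fun_prop))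
    (hint (fun p => 2 * Gp p + (4 * L ^ 2 * G1 p + 4 * L ^ 2 * G2 p) + 12 * L ^ 4 * f p ^ 2)
      (by fun_prop)) (isClosed_stadium α β).measurableSet hpt
  have i1 : Integrable (fun p => 2 * Gp p) (volume.restrict (Stadium α β)) := hint _ (by fun_prop)
  have i2 : Integrable (fun p => 4 * L ^ 2 * G1 p) (volume.restrict (Stadium α β)) :=
    hint _ (by fun_prop)
  have i3 : Integrable (fun p => 4 * L ^ 2 * G2 p) (volume.restrict (Stadium α β)) :=
    hint _ (by fun_prop)
  have i4 : Integrable (fun p => 12 * L ^ 4 * f p ^ 2) (volume.restrict (Stadium α β)) :=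
    hint _ (by fun_prop)
  have i23 : Integrable (fun p => 4 * L ^ 2 * G1 p + 4 * L ^ 2 * G2 p)
    (volume.restrict (Stadium α β)) := i2.add i3
  have i123 : Integrable (fun p => 2 * Gp p + (4 * L ^ 2 * G1 p + 4 * L ^ 2 * G2 p))
    (volume.restrict (Stadium α β)) := i1.add i23
  rw [integral_add i123 i4, integral_add i1 i23, integral_add i2 i3,
    integral_div, h1, integral_const_mul, integral_const_mul, integral_const_mul,
    integral_const_mul, I0'] at hmono
  have hE : 0 ≤ ∫ p in Stadium α β, f p ^ 2 := integral_nonneg fun p => sq_nonneg _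
  set E := ∫ p in Stadium α β, f p ^ 2
  have h3 := mul_le_mul_of_nonneg_left hbd2 (by positivity : 0 ≤ 4 * L ^ 2)
  have e3 : 4 * L ^ 2 * (L / β * B) = 4 * L ^ 3 / β * B := by ring
  have k1 : 0 ≤ 12 * L ^ 4 * B := by positivity
  have k2 : 0 ≤ 4 * L ^ 3 / β * E := by positivity
  change 1 / 2 ≤ (12 * L ^ 4 + 4 * L ^ 3 / β) * (E + B)
  rw [e3] at h3
  linarith

/-- There is `C > 0` depending only on `α, β` such that every real Dirichlet
quasimode datum with `‖u‖_{L²(S)} = 1` satisfies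
`‖f‖²_{L²(S)} + ∫_{∂S ∩ W} w |∂_N u|² dl ≥ C`. -/
theorem stmt0 (α β : ℝ) (hα : 0 < α) (hβ : 0 < β) :
    ∃ C > 0, ∀ d : QMDatum α β,
      (∫ p in Stadium α β, (d.u p) ^ 2) = 1 →
      (∫ p in Stadium α β, (d.f p) ^ 2) +
        bdryIntW α β (fun p n => (|p.1| - α) * (nderiv d.u p n) ^ 2) ≥ C := by
  have hK : 0 < 12 * (α + β) ^ 4 + 4 * (α + β) ^ 3 / β := by positivity
  refine ⟨1 / 2 / (12 * (α + β) ^ 4 + 4 * (α + β) ^ 3 / β), by positivity, fun d h1 => ?_⟩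
  obtain ⟨V, hV, hSV, hs⟩ := d.smooth
  obtain ⟨v, hv, hvu⟩ := smooth_ext (isClosed_stadium α β) hV hSV hs
  have hm := (isClosed_stadium α β).measurableSet
  have hsub : StadiumBoundary α β ⊆ Stadium α β := by
    rintro ⟨x, y⟩ (⟨h1, h2⟩ | ⟨h1, h2⟩)
    · refine Or.inl ⟨abs_le.1 h1, abs_le.1 ?_⟩
      dsimp only at h2 ⊢
      rcases h2 with h2 | h2 <;> simp only [h2, abs_neg, abs_of_pos hβ, le_refl]
    · right
      dsimp only at h1 h2
      rcases le_total 0 x with h0 | h0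
      · rw [abs_of_nonneg h0] at h1 h2
        exact Or.inl ⟨h1.le, h2⟩
      · rw [abs_of_nonpos h0] at h1 h2
        exact Or.inr ⟨le_of_eq (by dsimp only; linarith), by dsimp only; linarith⟩
  have key := main_global hα hβ hv
    (fun p hp => (hvu p (hsub hp)).eq_of_nhds.trans (d.dirichlet p hp)) d.lam
    (by
      rw [← h1]
      exact setIntegral_congr_fun hm fun p hp => by simp only [(hvu p hp).eq_of_nhds])
  have e1 : ∫ p in Stadium α β, (lap v p - d.lam ^ 2 * v p) ^ 2 =
      ∫ p in Stadium α β, (d.f p) ^ 2 := by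
    refine setIntegral_congr_fun hm fun p hp => ?_
    have a1 := (pdx_congr (pdx_congr (hvu p hp))).eq_of_nhds
    have a2 := (pdy_congr (pdy_congr (hvu p hp))).eq_of_nhds
    simp only [← d.eqn p hp, lap, a1, a2, (hvu p hp).eq_of_nhds]
  have e2 : bdryIntW α β (fun p n => (|p.1| - α) * (nderiv v p n) ^ 2) =
      bdryIntW α β (fun p n => (|p.1| - α) * (nderiv d.u p n) ^ 2) := by
    unfold bdryIntW
    congr 1
    refine intervalIntegral.integral_congr fun θ hθ => ?_
    rw [uIcc_of_le (by linarith [Real.pi_pos])] at hθ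
    have b1 := (arc_mem hα hβ (Or.inl rfl) hθ).2.2
    have b2 := (arc_mem hα hβ (Or.inr rfl) hθ).2.2
    rw [one_mul] at b1
    rw [neg_one_mul] at b2
    simp only [nderiv, (pdx_congr (hvu _ b1)).eq_of_nhds, (pdy_congr (hvu _ b1)).eq_of_nhds,
      (pdx_congr (hvu _ b2)).eq_of_nhds, (pdy_congr (hvu _ b2)).eq_of_nhds]
  rw [e1, e2] at key
  exact (div_le_iff₀' hK).2 key
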